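/- For k ≥ 1 let H_k be the hypothesis class on X = [0,1] consisting of indicators of unions of at most k open subintervals, i.e., H_k = ⋃_{k'≤k} { 1[⋃_{i=1}^{k'} (a_i,b_i)] : 0 ≤ a_i < b_i ≤ 1 for all i ∈ [k'] } ∪ {the all-zero function}. There exist a universal constant C > 0 and a deterministic learning algorithm A (not depending on k) such that for every k ≥ 1, all ε, δ ∈ (0,1), every target h* ∈ H_k, and every distribution D over D_{h*}: if m ≥ C·( k·log(1/ε) + log(1/δ) )/ε, then with probability at least 1−δ over S_trn ~ D^m, atk_D(h*, S_trn, A) ≤ ε. -/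

import Mathlib

/-!
A union of `k` intervals cuts the line into at most `2 * k + 1` consecutive cells on which the
target is constant. The learner copies the label of the nearest example to the left, so an example
at `y` settles the label of every later point of the cell of `y`, and no further clean-label example
can change that: the new nearest example lies in the same cell.

Let `W` be the part of the line that is not settled yet. At least half of the mass of `W` consists
of points that settle a fraction `1 / (2 * n)` of `W`, where `n` is the number of cells. Hence, as
long as `μ W > ε`, one more draw halves the potential `(μ W / ε) ^ (2 * n)` with probability at
least `ε / 2`, and multiplies its expectation by at most `1 - ε / 4`. The potential is at least `1`
while `μ W > ε`, so Markov's inequality bounds the probability of failure after `m` draws by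
`(1 - ε / 4) ^ m * (1 / ε) ^ (2 * n)`.
-/

open MeasureTheory ENNReal

/-- The multiset of training examples determined by a tuple of i.i.d. draws. -/
def toTrain {α : Type*} {m : ℕ} (f : Fin m → α) : Multiset α := ↑(List.ofFn f)

/-- The distribution of `m` i.i.d. draws from `D`. -/
noncomputable def samples {α : Type*} [MeasurableSpace α] (D : Measure α) (m : ℕ) :
    Measure (Fin m → α) := Measure.pi fun _ => D

/-- The clean-label attackable rate of a deterministic learner. -/
noncomputable def atkDet {X : Type*} [MeasurableSpace X] (D : Measure (X × Bool)) (h : X → Bool)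
    (S : Multiset (X × Bool)) (A : Multiset (X × Bool) → X → Bool) : ℝ≥0∞ :=
  ⨆ Adv : {f : X → Multiset (X × Bool) // ∀ x : X, ∀ p ∈ f x, p.2 = h p.1},
    D {p : X × Bool | A (S + Adv.1 p.1) p.1 ≠ h p.1}

/-- The unit interval `[0,1]` as an instance space. -/
abbrev UnitI : Type := (Set.Icc (0 : ℝ) 1)

/-- The class of indicators of unions of at most `k` open subintervals of `[0,1]`
(taking `k' = 0` intervals yields the all-zero function). -/
def Hunion (k : ℕ) : Set (UnitI → Bool) :=
  {h | ∃ k' : ℕ, k' ≤ k ∧ ∃ a b : Fin k' → ℝ,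
    (∀ i, 0 ≤ a i ∧ a i < b i ∧ b i ≤ 1) ∧
    ∀ x : UnitI, h x = decide (∃ i, a i < (x : ℝ) ∧ (x : ℝ) < b i)}

open Set

section Potential

theorem lintegral_ofReal_le_of_le_half {Z : Type*} [MeasurableSpace Z] {P : Measure Z}
    [IsProbabilityMeasure P] {f : Z → ℝ} {b p : ℝ} (hf : Measurable f) (hb : 0 ≤ b)
    (hfb : ∀ z, f z ≤ b) (hp : p ≤ P.real {z | f z ≤ b / 2}) :
    ∫⁻ z, ENNReal.ofReal (f z) ∂P ≤ ENNReal.ofReal ((1 - p / 2) * b) := by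
  set G := {z | f z ≤ b / 2}
  have hG : MeasurableSet G := measurableSet_le hf measurable_const
  calc ∫⁻ z, ENNReal.ofReal (f z) ∂P
      = ∫⁻ z in G, ENNReal.ofReal (f z) ∂P + ∫⁻ z in Gᶜ, ENNReal.ofReal (f z) ∂P :=
        (lintegral_add_compl _ hG).symm
    _ ≤ ∫⁻ _ in G, ENNReal.ofReal (b / 2) ∂P + ∫⁻ _ in Gᶜ, ENNReal.ofReal b ∂P := by
        refine add_le_add (setLIntegral_mono measurable_const fun z hz => ?_)
          (lintegral_mono fun z => ENNReal.ofReal_le_ofReal (hfb z))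
        exact ENNReal.ofReal_le_ofReal hz
    _ = ENNReal.ofReal (b / 2 * P.real G + b * (1 - P.real G)) := by
        rw [setLIntegral_const, setLIntegral_const, ← probReal_compl_eq_one_sub hG,
          ENNReal.ofReal_add (by positivity) (by positivity), ENNReal.ofReal_mul (by positivity),
          ENNReal.ofReal_mul hb, ofReal_measureReal, ofReal_measureReal]
    _ ≤ ENNReal.ofReal ((1 - p / 2) * b) := by
        apply ENNReal.ofReal_le_ofReal
        linear_combination b / 2 * hp

theorem one_sub_one_div_pow_le_half {s : ℕ} (hs : 0 < s) : (1 - 1 / (s : ℝ)) ^ s ≤ 1 / 2 :=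
  (Real.one_sub_div_pow_le_exp_neg (Nat.one_le_cast.2 hs)).trans Real.exp_neg_one_lt_half.le

theorem one_sub_pow_mul_pow_le {t x δ : ℝ} {m s : ℕ} (ht : t ≤ 1) (hx : 0 < x) (hδ : 0 < δ)
    (h : s * Real.log x + Real.log (1 / δ) ≤ t * m) : (1 - t) ^ m * x ^ s ≤ δ := by
  have hexp : (1 - t) ^ m ≤ Real.exp (-(t * m)) := by
    calc (1 - t) ^ m ≤ Real.exp (-t) ^ m :=
          pow_le_pow_left₀ (sub_nonneg.2 ht) (Real.one_sub_le_exp_neg t) m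
      _ = Real.exp (-(t * m)) := by rw [← Real.exp_nat_mul]; ring_nf
  calc (1 - t) ^ m * x ^ s ≤ Real.exp (-(t * m)) * Real.exp (s * Real.log x) := by
        rw [Real.exp_nat_mul, Real.exp_log hx]
        gcongr
    _ = Real.exp (s * Real.log x - t * m) := by rw [← Real.exp_add]; ring_nf
    _ ≤ Real.exp (-Real.log (1 / δ)) := Real.exp_le_exp.2 (by linarith)
    _ = δ := by rw [one_div, Real.log_inv, neg_neg, Real.exp_log hδ]

theorem one_sub_div_four_pow_mul_pow_le {k m : ℕ} {ε δ : ℝ} (hk : 1 ≤ k) (hε : 0 < ε)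
    (hε1 : ε ≤ 1) (hδ : 0 < δ) (hδ1 : δ ≤ 1)
    (hm : 24 * (k * Real.log (1 / ε) + Real.log (1 / δ)) / ε ≤ m) :
    (1 - ε / 4) ^ m * (1 / ε) ^ (2 * (2 * k + 1)) ≤ δ := by
  refine one_sub_pow_mul_pow_le (by linarith) (by positivity) hδ ?_
  have hlogδ : 0 ≤ Real.log (1 / δ) := Real.log_nonneg (one_le_one_div hδ hδ1)
  have hkε : Real.log (1 / ε) ≤ k * Real.log (1 / ε) :=
    le_mul_of_one_le_left (Real.log_nonneg (one_le_one_div hε hε1)) (Nat.one_le_cast.2 hk)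
  rw [div_le_iff₀ hε] at hm
  push_cast
  linarith

end Potential

section Samples

variable {Z : Type*} [MeasurableSpace Z] {P : Measure Z} [IsProbabilityMeasure P]

theorem ofReal_one_sub_le_of_ae_or {bad good : Set Z} {δ : ℝ} (hδ : 0 ≤ δ)
    (hbad : P bad ≤ ENNReal.ofReal δ) (h : ∀ᵐ z ∂P, z ∈ bad ∨ z ∈ good) :
    ENNReal.ofReal (1 - δ) ≤ P good := by
  rw [ENNReal.ofReal_sub _ hδ, ENNReal.ofReal_one, tsub_le_iff_left]
  calc 1 = P univ := measure_univ.symm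
    _ ≤ P (bad ∪ good) := measure_mono_ae <| h.mono fun _ hz _ => hz
    _ ≤ P bad + P good := measure_union_le _ _
    _ ≤ ENNReal.ofReal δ + P good := by gcongr

instance isProbabilityMeasure_samples (m : ℕ) : IsProbabilityMeasure (samples P m) := by
  unfold samples
  infer_instance

theorem ae_samples_forall {q : Z → Prop} (hq : ∀ᵐ z ∂P, q z) (m : ℕ) :
    ∀ᵐ f ∂samples P m, ∀ i, q (f i) :=
  ae_all_iff.2 fun i => (Measure.quasiMeasurePreserving_eval (fun _ : Fin m => P) i).ae hq

theorem samples_succ_apply {m : ℕ} {E : Set (Fin (m + 1) → Z)} (hE : MeasurableSet E) :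
    samples P (m + 1) E = ∫⁻ z, samples P m {f | (Fin.cons z f : Fin (m + 1) → Z) ∈ E} ∂P := by
  have hsplit := (measurePreserving_piFinSuccAbove (fun _ : Fin (m + 1) => P) 0).symm
  unfold samples
  rw [← hsplit.measure_preimage hE.nullMeasurableSet, Measure.prod_apply (hsplit.measurable hE)]
  simp only [MeasurableEquiv.piFinSuccAbove_symm_apply, Fin.insertNthEquiv_zero]
  rfl

end Samples

section Covering

variable {Z X : Type*} [MeasurableSpace Z] [MeasurableSpace X] {P : Measure Z}
  [IsProbabilityMeasure P] {μ : Measure X} [IsFiniteMeasure μ] {R : Z → Set X} {W : Set X}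

theorem measurableSet_lt_measureReal_sdiff_iUnion (hR : MeasurableSet {q : Z × X | q.2 ∈ R q.1})
    (hW : MeasurableSet W) (m : ℕ) (ε : ℝ) :
    MeasurableSet {f : Fin m → Z | ε < μ.real (W \ ⋃ i, R (f i))} := by
  have hcover (i : Fin m) : MeasurableSet {q : (Fin m → Z) × X | q.2 ∈ R (q.1 i)} :=
    (by fun_prop : Measurable fun q : (Fin m → Z) × X => (q.1 i, q.2)) hR
  have hjoint : MeasurableSet {q : (Fin m → Z) × X | q.2 ∈ W \ ⋃ i, R (q.1 i)} := by
    convert (measurable_snd hW).diff (MeasurableSet.iUnion hcover) using 1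
    ext q
    simp
  exact measurableSet_lt measurable_const (measurable_measure_prodMk_left hjoint).ennreal_toReal

theorem measurable_measureReal_sdiff (hR : MeasurableSet {q : Z × X | q.2 ∈ R q.1})
    (hW : MeasurableSet W) : Measurable fun z => μ.real (W \ R z) :=
  (measurable_measure_prodMk_left ((measurable_snd hW).diff hR)).ennreal_toReal

theorem lintegral_measureReal_sdiff_div_pow_le {ε p : ℝ} (hε : 0 < ε) {s : ℕ} (hs : 0 < s)
    (hR : MeasurableSet {q : Z × X | q.2 ∈ R q.1}) (hW : MeasurableSet W)
    (hp : p ≤ P.real {z | μ.real (W \ R z) ≤ (1 - 1 / s) * μ.real W}) :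
    ∫⁻ z, ENNReal.ofReal ((μ.real (W \ R z) / ε) ^ s) ∂P ≤
      ENNReal.ofReal ((1 - p / 2) * (μ.real W / ε) ^ s) := by
  refine lintegral_ofReal_le_of_le_half
    (((measurable_measureReal_sdiff hR hW).div_const ε).pow_const s) (by positivity)
    (fun z => ?_) (hp.trans <| measureReal_mono fun z hz => ?_)
  · have hle : μ.real (W \ R z) ≤ μ.real W := measureReal_mono sdiff_subset
    gcongr
  · calc (μ.real (W \ R z) / ε) ^ s ≤ ((1 - 1 / s) * μ.real W / ε) ^ s := by
          gcongr
          exact hz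
      _ = (1 - 1 / (s : ℝ)) ^ s * (μ.real W / ε) ^ s := by rw [mul_div_assoc, mul_pow]
      _ ≤ 1 / 2 * (μ.real W / ε) ^ s := by
          gcongr
          exact one_sub_one_div_pow_le_half hs
      _ = (μ.real W / ε) ^ s / 2 := by ring

theorem samples_lt_measureReal_sdiff_iUnion_le {ε p : ℝ} (hε : 0 < ε) {s : ℕ} (hs : 0 < s)
    (hR : MeasurableSet {q : Z × X | q.2 ∈ R q.1})
    (hshrink : ∀ W, MeasurableSet W → ε < μ.real W →
      p ≤ P.real {z | μ.real (W \ R z) ≤ (1 - 1 / s) * μ.real W})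
    (m : ℕ) (hW : MeasurableSet W) :
    samples P m {f | ε < μ.real (W \ ⋃ i, R (f i))} ≤
      ENNReal.ofReal ((1 - p / 2) ^ m * (μ.real W / ε) ^ s) := by
  induction m generalizing W with
  | zero =>
    rcases le_or_gt (μ.real W) ε with hWε | hWε
    · simp [hWε.not_gt]
    · refine prob_le_one.trans (ENNReal.one_le_ofReal.2 ?_)
      rw [pow_zero, one_mul]
      exact one_le_pow₀ ((one_le_div hε).2 hWε.le)
  | succ m ih =>
    rcases le_or_gt (μ.real W) ε with hWε | hWε
    · have hempty : {f : Fin (m + 1) → Z | ε < μ.real (W \ ⋃ i, R (f i))} = ∅ :=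
        eq_empty_of_forall_notMem fun f hf =>
          (hf.trans_le ((measureReal_mono sdiff_subset).trans hWε)).false
      simp [hempty]
    have hρ : 0 ≤ 1 - p / 2 := by
      linarith [(hshrink W hW hWε).trans measureReal_le_one]
    calc samples P (m + 1) {f | ε < μ.real (W \ ⋃ i, R (f i))}
        = ∫⁻ z, samples P m {f | ε < μ.real ((W \ R z) \ ⋃ i, R (f i))} ∂P := by
          rw [samples_succ_apply (measurableSet_lt_measureReal_sdiff_iUnion hR hW _ _)]
          have hcons (z : Z) (f : Fin m → Z) :
              W \ ⋃ i, R ((Fin.cons z f : Fin (m + 1) → Z) i) = (W \ R z) \ ⋃ i, R (f i) := by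
            ext x
            simp [Fin.forall_fin_succ, and_assoc]
          simp only [mem_ofPred_eq, hcons]
      _ ≤ ∫⁻ z, ENNReal.ofReal ((1 - p / 2) ^ m) *
            ENNReal.ofReal ((μ.real (W \ R z) / ε) ^ s) ∂P := by
          refine lintegral_mono fun z => ?_
          rw [← ENNReal.ofReal_mul (by positivity)]
          exact ih (hW.diff (measurable_prodMk_left hR))
      _ = ENNReal.ofReal ((1 - p / 2) ^ m) *
            ∫⁻ z, ENNReal.ofReal ((μ.real (W \ R z) / ε) ^ s) ∂P :=
          lintegral_const_mul' _ _ ENNReal.ofReal_ne_top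
      _ ≤ ENNReal.ofReal ((1 - p / 2) ^ m) *
            ENNReal.ofReal ((1 - p / 2) * (μ.real W / ε) ^ s) := by
          gcongr
          exact lintegral_measureReal_sdiff_div_pow_le hε hs hR hW (hshrink W hW hWε)
      _ = ENNReal.ofReal ((1 - p / 2) ^ (m + 1) * (μ.real W / ε) ^ s) := by
          rw [← ENNReal.ofReal_mul (by positivity), pow_succ, mul_assoc]

end Covering

section Reach

variable {X ι : Type*} [LinearOrder X]

/-- The points of the cell of `y` that lie at or above `y`, where the cells are the fibres of `c`:
these are the points whose label is settled by an example at `y`. -/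
def reach (c : X → ι) (y : X) : Set X := Ici y ∩ c ⁻¹' {c y}

variable [TopologicalSpace X] [OrderClosedTopology X] [MeasurableSpace X]

theorem measurableSet_reach [OpensMeasurableSpace X] [MeasurableSpace ι]
    [MeasurableSingletonClass ι] {c : X → ι} (hc : Measurable c) (y : X) :
    MeasurableSet (reach c y) :=
  measurableSet_Ici.inter (hc (measurableSet_singleton _))

variable [SecondCountableTopology X]

theorem measure_setOf_measure_Ici_lt_le (ν : Measure X) (g : ℝ≥0∞) :
    ν {x | ν (Ici x) < g} ≤ g := by
  set B := {x | ν (Ici x) < g}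
  by_cases hmin : ∃ a, IsLeast B a
  · obtain ⟨a, ha⟩ := hmin
    exact (measure_mono fun x hx => ha.2 hx).trans ha.1.le
  · obtain ⟨T, hTB, hT, hTU⟩ :=
      TopologicalSpace.isOpen_biUnion_countable B Ioi fun _ _ => isOpen_Ioi
    have hcover : B ⊆ ⋃ x ∈ T, Ioi x := by
      intro x hx
      obtain ⟨y, hy, hyx⟩ : ∃ y ∈ B, y < x := by
        by_contra! hle
        exact hmin ⟨x, hx, hle⟩
      exact hTU ▸ mem_biUnion hy hyx
    have hdir : DirectedOn (Function.onFun (· ⊆ ·) (Ioi : X → Set X)) T := fun x hx y hy =>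
      (le_total x y).elim (fun h => ⟨x, hx, Subset.rfl, Ioi_subset_Ioi h⟩)
        fun h => ⟨y, hy, Ioi_subset_Ioi h, Subset.rfl⟩
    calc ν B ≤ ν (⋃ x ∈ T, Ioi x) := measure_mono hcover
      _ = ⨆ x ∈ T, ν (Ioi x) := measure_biUnion_eq_iSup hT hdir
      _ ≤ g := iSup₂_le fun x hx => (measure_mono Ioi_subset_Ici_self).trans (hTB hx).le

variable [OpensMeasurableSpace X] {c : X → ι}

theorem measure_setOf_measure_inter_reach_lt_le [Fintype ι] (μ : Measure X) (W : Set X)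
    (g : ℝ≥0∞) : μ {x ∈ W | μ (W ∩ reach c x) < g} ≤ Fintype.card ι * g := by
  let ν (j : ι) : Measure X := μ.restrict (W ∩ c ⁻¹' {j})
  have hcell : {x ∈ W | μ (W ∩ reach c x) < g} ⊆
      ⋃ j, {x | ν j (Ici x) < g} ∩ (W ∩ c ⁻¹' {j}) := by
    rintro x ⟨hxW, hx⟩
    refine mem_iUnion.2 ⟨c x, ?_, hxW, rfl⟩
    rw [mem_ofPred_eq, Measure.restrict_apply measurableSet_Ici]
    rwa [reach, inter_left_comm] at hx
  calc μ {x ∈ W | μ (W ∩ reach c x) < g}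
      ≤ ∑ j, μ ({x | ν j (Ici x) < g} ∩ (W ∩ c ⁻¹' {j})) :=
        (measure_mono hcell).trans (measure_iUnion_fintype_le _ _)
    _ ≤ ∑ _j : ι, g := Finset.sum_le_sum fun j _ =>
        (Measure.le_restrict_apply _ _).trans (measure_setOf_measure_Ici_lt_le (ν j) g)
    _ = Fintype.card ι * g := by simp

variable [MeasurableSpace ι] [MeasurableSingletonClass ι]

theorem measurableSet_mem_reach [Countable ι] (hc : Measurable c) :
    MeasurableSet {q : X × X | q.2 ∈ reach c q.1} :=
  (measurableSet_le measurable_fst measurable_snd).inter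
    (measurableSet_eq_fun (hc.comp measurable_snd) (hc.comp measurable_fst))

theorem half_measureReal_le_measureReal_setOf_sdiff_reach_le [Fintype ι] [Nonempty ι]
    (hc : Measurable c) (μ : Measure X) [IsFiniteMeasure μ] (W : Set X) :
    μ.real W / 2 ≤ μ.real
      {x | μ.real (W \ reach c x) ≤ (1 - 1 / (2 * Fintype.card ι : ℕ)) * μ.real W} := by
  set G := {x | μ.real (W \ reach c x) ≤ (1 - 1 / (2 * Fintype.card ι : ℕ)) * μ.real W}
  set g : ℝ := 1 / (2 * Fintype.card ι : ℕ) * μ.real W with hg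
  set light := {x ∈ W | μ (W ∩ reach c x) < ENNReal.ofReal g}
  have hlight : μ.real light ≤ μ.real W / 2 := by
    have hbound : μ.real light ≤ Fintype.card ι * g := by
      refine ENNReal.toReal_le_of_le_ofReal (by positivity) ?_
      rw [ENNReal.ofReal_mul (by positivity), ENNReal.ofReal_natCast]
      exact measure_setOf_measure_inter_reach_lt_le μ W _
    refine hbound.trans_eq ?_
    rw [hg]
    push_cast
    field_simp
  have hcover : W ⊆ G ∪ light := by
    intro x hx
    refine or_iff_not_imp_right.2 fun hxl => ?_
    have hheavy : g ≤ μ.real (W ∩ reach c x) :=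
      (ENNReal.ofReal_le_iff_le_toReal (measure_ne_top _ _)).1 (not_lt.1 fun h => hxl ⟨hx, h⟩)
    have hsplit := measureReal_sdiff_add_inter (μ := μ) (s := W) (measurableSet_reach hc x)
    change μ.real (W \ reach c x) ≤ _
    linarith
  have hunion : μ.real W ≤ μ.real G + μ.real light :=
    (measureReal_mono hcover).trans (measureReal_union_le G light)
  linarith

end Reach

section Cells

variable {X : Type*}

/-- The class of indicators of unions of at most `k` intervals of `X`, where an interval is any
order-connected set. Unions of fewer than `k` intervals are covered by taking some of them empty. -/
def intervalUnions (X : Type*) [Preorder X] (k : ℕ) : Set (X → Bool) :=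
  {h | ∃ s : Fin k → Set X, (∀ i, (s i).OrdConnected) ∧ h ⁻¹' {true} = ⋃ i, s i}

theorem measurable_of_mem_intervalUnions [LinearOrder X] [TopologicalSpace X]
    [OrderClosedTopology X] [MeasurableSpace X] [OpensMeasurableSpace X] {k : ℕ} {h : X → Bool}
    (hh : h ∈ intervalUnions X k) : Measurable h := by
  obtain ⟨s, hs, hhs⟩ := hh
  exact measurable_to_bool (hhs ▸ MeasurableSet.iUnion fun i => (hs i).measurableSet)

theorem exists_monotone_fin_factorsThrough_of_isUpperSet [LinearOrder X] {ι : Type*} [Fintype ι]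
    {U : ι → Set X} (hU : ∀ i, IsUpperSet (U i)) :
    ∃ c : X → Fin (Fintype.card ι + 1),
      Monotone c ∧ (fun x => {i | x ∈ U i}).FactorsThrough c := by
  classical
  let φ (x : X) : Finset ι := {i | x ∈ U i}
  have hφ : Monotone φ := fun x y hxy i => by
    simpa only [φ, Finset.mem_filter_univ] using @hU i x y hxy
  refine ⟨fun x => ⟨(φ x).card, Nat.lt_succ_of_le (φ x).card_le_univ⟩,
    fun x y hxy => Finset.card_le_card (hφ hxy), fun x y hxy => ?_⟩
  have hcard : (φ x).card = (φ y).card := congrArg Fin.val hxy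
  have heq : φ x = φ y := (le_total x y).elim
    (fun h => Finset.eq_of_subset_of_card_le (hφ h) hcard.ge)
    fun h => (Finset.eq_of_subset_of_card_le (hφ h) hcard.le).symm
  simpa [φ] using congrArg (fun t : Finset ι => (t : Set ι)) heq

theorem isUpperSet_upperClosure_sdiff [Preorder X] {s : Set X}
    (hs : s.OrdConnected) : IsUpperSet ((upperClosure s : Set X) \ s) := by
  rintro x y hxy ⟨⟨a, ha, hax⟩, hxs⟩
  exact ⟨⟨a, ha, hax.trans hxy⟩, fun hy => hxs (hs.out ha hy ⟨hax, hxy⟩)⟩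

theorem exists_monotone_fin_factorsThrough_of_mem_intervalUnions [LinearOrder X] {k : ℕ}
    {h : X → Bool} (hh : h ∈ intervalUnions X k) :
    ∃ c : X → Fin (2 * k + 1), Monotone c ∧ h.FactorsThrough c := by
  obtain ⟨s, hs, hhs⟩ := hh
  let U : Fin k ⊕ Fin k → Set X :=
    Sum.elim (fun i => upperClosure (s i)) fun i => (upperClosure (s i) : Set X) \ s i
  have hU : ∀ i, IsUpperSet (U i) :=
    Sum.forall.2
      ⟨fun i => (upperClosure (s i)).upper, fun i => isUpperSet_upperClosure_sdiff (hs i)⟩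
  have hcells := exists_monotone_fin_factorsThrough_of_isUpperSet hU
  rw [Fintype.card_sum, Fintype.card_fin, ← two_mul] at hcells
  obtain ⟨c, hc, hcU⟩ := hcells
  have hmem (x : X) (i : Fin k) : x ∈ s i ↔ x ∈ U (.inl i) ∧ x ∉ U (.inr i) := by
    have hsub := @subset_upperClosure _ _ (s i) x
    simp only [U, Sum.elim_inl, Sum.elim_inr, mem_sdiff, SetLike.mem_coe] at hsub ⊢
    tauto
  refine ⟨c, hc, fun x y hxy => ?_⟩
  have hxyU (i) : x ∈ U i ↔ y ∈ U i := Set.ext_iff.1 (hcU hxy) i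
  have hpre : x ∈ h ⁻¹' {true} ↔ y ∈ h ⁻¹' {true} := by
    simp only [hhs, mem_iUnion, hmem, hxyU]
  exact Bool.eq_iff_iff.2 hpre

end Cells

theorem mem_toTrain {α : Type*} {m : ℕ} {f : Fin m → α} {a : α} :
    a ∈ toTrain f ↔ ∃ i, f i = a := by
  simp [toTrain, List.mem_ofFn]

section Learner

variable {X : Type*} [LinearOrder X]

open Classical in
/-- The learner that copies the label of the nearest example at or below `x`, and answers `false`
if there is none. Should several examples sit at that nearest position with conflicting labels, it
answers `true`. -/
noncomputable def nearestLeft (S : Multiset (X × Bool)) (x : X) : Bool :=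
  decide (∃ p ∈ S, p.2 = true ∧ p.1 ≤ x ∧ ∀ q ∈ S, q.1 ≤ x → q.1 ≤ p.1)

theorem nearestLeft_eq_of_forall {S : Multiset (X × Bool)} {x : X} {r : X × Bool} {b : Bool}
    (hr : r ∈ S) (hrx : r.1 ≤ x) (hb : ∀ q ∈ S, q.1 ≤ x → r.1 ≤ q.1 → q.2 = b) :
    nearestLeft S x = b := by
  classical
  obtain ⟨n, hn, hmax⟩ := Finset.exists_max_image (S.toFinset.filter (·.1 ≤ x)) Prod.fst
    ⟨r, by simp [hr, hrx]⟩
  simp only [Finset.mem_filter, Multiset.mem_toFinset, and_imp] at hn hmax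
  have hnb : n.2 = b := hb n hn.1 hn.2 (hmax r hr hrx)
  rw [nearestLeft, Bool.eq_iff_iff, decide_eq_true_iff]
  constructor
  · rintro ⟨p, hp, hp2, hpx, hpmax⟩
    rw [← hb p hp hpx (hpmax r hr hrx), hp2]
  · exact fun hbt => ⟨n, hn.1, hnb.trans hbt, hn.2, hmax⟩

variable {ι : Type*} [PartialOrder ι] {c : X → ι} {h : X → Bool} {S : Multiset (X × Bool)}

theorem nearestLeft_eq_of_mem_reach (hc : Monotone c) (hh : h.FactorsThrough c)
    (hS : ∀ p ∈ S, p.2 = h p.1) {p : X × Bool} (hp : p ∈ S) {x : X} (hx : x ∈ reach c p.1) :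
    nearestLeft S x = h x := by
  refine nearestLeft_eq_of_forall hp hx.1 fun q hq hqx hpq => ?_
  have hcell : c q.1 = c x := le_antisymm (hc hqx) ((show c x = c p.1 from hx.2) ▸ hc hpq)
  rw [hS q hq, hh hcell]

theorem atkDet_nearestLeft_le [MeasurableSpace X] (hc : Monotone c) (hh : h.FactorsThrough c)
    (hS : ∀ p ∈ S, p.2 = h p.1) (D : Measure (X × Bool)) :
    atkDet D h S nearestLeft ≤ D.map Prod.fst (⋃ p ∈ S, reach c p.1)ᶜ := by
  refine iSup_le fun Adv => le_trans (measure_mono fun z hz => ?_)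
    (Measure.le_map_apply measurable_fst.aemeasurable _)
  have hclean : ∀ q ∈ S + Adv.1 z.1, q.2 = h q.1 := fun q hq =>
    (Multiset.mem_add.1 hq).elim (hS q) (Adv.2 z.1 q)
  simp only [mem_preimage, mem_compl_iff, mem_iUnion, not_exists]
  exact fun p hp hzp =>
    hz (nearestLeft_eq_of_mem_reach hc hh hclean (Multiset.mem_add.2 (.inl hp)) hzp)

theorem atkDet_toTrain_nearestLeft_le [MeasurableSpace X] (hc : Monotone c)
    (hh : h.FactorsThrough c) {m : ℕ} {f : Fin m → X × Bool} (hf : ∀ i, (f i).2 = h (f i).1)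
    (D : Measure (X × Bool)) :
    atkDet D h (toTrain f) nearestLeft ≤ D.map Prod.fst (⋃ i, reach c (f i).1)ᶜ := by
  have hclean : ∀ p ∈ toTrain f, p.2 = h p.1 := fun p hp => by
    obtain ⟨i, rfl⟩ := mem_toTrain.1 hp
    exact hf i
  refine (atkDet_nearestLeft_le hc hh hclean D).trans (measure_mono <| compl_subset_compl.2 ?_)
  exact iUnion_subset fun i => subset_biUnion_of_mem (u := fun p : X × Bool => reach c p.1)
    (mem_toTrain.2 ⟨i, rfl⟩)

end Learner

section Sampling

variable {X : Type*} [LinearOrder X] [TopologicalSpace X] [OrderClosedTopology X]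
  [SecondCountableTopology X] [MeasurableSpace X] [OpensMeasurableSpace X] {ι : Type*}
  {c : X → ι} {D : Measure (X × Bool)} [IsProbabilityMeasure D]

theorem samples_lt_measureReal_compl_iUnion_reach_le [Fintype ι] [Nonempty ι] [MeasurableSpace ι]
    [MeasurableSingletonClass ι] (hc : Measurable c) {ε : ℝ} (hε : 0 < ε) (m : ℕ) :
    samples D m {f | ε < (D.map Prod.fst).real (⋃ i, reach c (f i).1)ᶜ} ≤
      ENNReal.ofReal ((1 - ε / 4) ^ m * (1 / ε) ^ (2 * Fintype.card ι)) := by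
  have : IsProbabilityMeasure (D.map Prod.fst) :=
    Measure.isProbabilityMeasure_map measurable_fst.aemeasurable
  have hR : MeasurableSet {q : (X × Bool) × X | q.2 ∈ reach c q.1.1} :=
    (measurable_fst.prodMap measurable_id) (measurableSet_mem_reach hc)
  have hshrink (W : Set X) (hW : MeasurableSet W) (hWε : ε < (D.map Prod.fst).real W) :
      ε / 2 ≤ D.real {z | (D.map Prod.fst).real (W \ reach c z.1) ≤
        (1 - 1 / (2 * Fintype.card ι : ℕ)) * (D.map Prod.fst).real W} := by
    have hG : MeasurableSet {x | (D.map Prod.fst).real (W \ reach c x) ≤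
        (1 - 1 / (2 * Fintype.card ι : ℕ)) * (D.map Prod.fst).real W} :=
      measurableSet_le (measurable_measureReal_sdiff (measurableSet_mem_reach hc) hW)
        measurable_const
    have hhalf := half_measureReal_le_measureReal_setOf_sdiff_reach_le hc (D.map Prod.fst) W
    rw [map_measureReal_apply measurable_fst hG] at hhalf
    exact (by linarith : ε / 2 ≤ (D.map Prod.fst).real W / 2).trans hhalf
  have hpos : 0 < 2 * Fintype.card ι := by positivity
  have hbound := samples_lt_measureReal_sdiff_iUnion_le hε hpos hR hshrink m .univ
  rw [probReal_univ, div_div] at hbound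
  norm_num only at hbound ⊢
  simpa only [compl_eq_univ_sdiff] using hbound

end Sampling

theorem stmt15_general {X : Type*} [LinearOrder X] [TopologicalSpace X] [OrderClosedTopology X]
    [SecondCountableTopology X] [MeasurableSpace X] [BorelSpace X] :
    ∃ C : ℝ, 0 < C ∧
    ∃ A : Multiset (X × Bool) → X → Bool,
      ∀ k : ℕ, 1 ≤ k →
      ∀ ε δ : ℝ, 0 < ε → ε < 1 → 0 < δ → δ < 1 →
      ∀ hstar ∈ intervalUnions X k, ∀ D : Measure (X × Bool), IsProbabilityMeasure D →
        D {p : X × Bool | p.2 = hstar p.1} = 1 →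
        ∀ m : ℕ, C * (k * Real.log (1 / ε) + Real.log (1 / δ)) / ε ≤ (m : ℝ) →
          ENNReal.ofReal (1 - δ) ≤
            samples D m {f | atkDet D hstar (toTrain f) A ≤ ENNReal.ofReal ε} := by
  refine ⟨24, by norm_num, nearestLeft, fun k hk ε δ hε hε1 hδ hδ1 h hh D _ hD m hm => ?_⟩
  obtain ⟨c, hc, hhc⟩ := exists_monotone_fin_factorsThrough_of_mem_intervalUnions hh
  have hlabel : ∀ᵐ p ∂D, p.2 = h p.1 :=
    (mem_ae_iff_prob_eq_one (measurableSet_eq_fun measurable_snd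
      ((measurable_of_mem_intervalUnions hh).comp measurable_fst))).2 hD
  have hbad := samples_lt_measureReal_compl_iUnion_reach_le (D := D) hc.measurable hε m
  rw [Fintype.card_fin] at hbad
  have hδbad := hbad.trans
    (ENNReal.ofReal_le_ofReal (one_sub_div_four_pow_mul_pow_le hk hε hε1.le hδ hδ1.le hm))
  refine ofReal_one_sub_le_of_ae_or hδ.le hδbad ?_
  filter_upwards [ae_samples_forall hlabel m] with f hf
  refine or_iff_not_imp_left.2 fun hgood => ?_
  exact (atkDet_toTrain_nearestLeft_le hc hhc hf D).trans
    ((ENNReal.le_ofReal_iff_toReal_le (measure_ne_top _ _) hε.le).2 (not_lt.1 hgood))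

theorem Hunion_subset_intervalUnions (k : ℕ) : Hunion k ⊆ intervalUnions UnitI k := by
  rintro h ⟨k', hk', a, b, -, hh⟩
  refine ⟨fun j => {x | ∃ hj : (j : ℕ) < k', a ⟨j, hj⟩ < (x : ℝ) ∧ (x : ℝ) < b ⟨j, hj⟩},
    fun j => ⟨?_⟩, ?_⟩
  · rintro x ⟨hj, hax, _⟩ y ⟨_, _, hyb⟩ z ⟨hxz, hzy⟩
    exact ⟨hj, hax.trans_le hxz, lt_of_le_of_lt hzy hyb⟩
  · ext x
    simp only [mem_preimage, mem_singleton_iff, hh, decide_eq_true_iff, mem_iUnion, mem_ofPred_eq]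
    exact ⟨fun ⟨i, hi⟩ => ⟨i.castLE hk', i.2, hi⟩, fun ⟨j, hj, hx⟩ => ⟨⟨j, hj⟩, hx⟩⟩

/-- A single deterministic learner robustly learns unions of at most `k` intervals, for
every `k`, with `C (k log(1/ε) + log(1/δ))/ε` samples. -/
theorem stmt15 :
    ∃ C : ℝ, 0 < C ∧
    ∃ A : Multiset (UnitI × Bool) → UnitI → Bool,
      ∀ k : ℕ, 1 ≤ k →
      ∀ ε δ : ℝ, 0 < ε → ε < 1 → 0 < δ → δ < 1 →
      ∀ hstar ∈ Hunion k, ∀ D : Measure (UnitI × Bool), IsProbabilityMeasure D →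
        D {p : UnitI × Bool | p.2 = hstar p.1} = 1 →
        ∀ m : ℕ, C * (k * Real.log (1 / ε) + Real.log (1 / δ)) / ε ≤ (m : ℝ) →
          ENNReal.ofReal (1 - δ) ≤
            samples D m {f | atkDet D hstar (toTrain f) A ≤ ENNReal.ofReal ε} := by
  obtain ⟨C, hC, A, hA⟩ := stmt15_general (X := UnitI)
  exact ⟨C, hC, A, fun k hk ε δ hε hε1 hδ hδ1 h hh =>
    hA k hk ε δ hε hε1 hδ hδ1 h (Hunion_subset_intervalUnions k hh)⟩
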